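/- Let k, d ∈ ℕ and let F_d^k = { f : [0,1]^d → ℝ : for every multi-index α ∈ ℕ_0^d with |α| ≤ k, the partial derivative D^α f exists, is continuous on [0,1]^d, and satisfies ‖D^α f‖_∞ ≤ 1 }. Then there exists a constant C > 0 (depending on k and d) such that for every n ≥ 1 there exist points x_1,…,x_n ∈ [0,1]^d and a map φ : ℝ^n → L²([0,1]^d) such that sup_{f ∈ F_d^k} ‖ f − φ(f(x_1),…,f(x_n)) ‖_{L²([0,1]^d)} ≤ C · n^{−k/d}. -/

import Mathlib

open MeasureTheory Set
open scoped ENNReal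

/-!
Since the reconstruction map is arbitrary, `φ` may return any member `g` of the class that has the
observed values. The error `f - g` then vanishes on the sampling points, and it suffices to show
that `f, g ∈ F_d^k` agreeing on the grid `{0, 1/m, …, (m-1)/m}^d`, with `m = ⌊n^{1/d}⌋`, differ by
`O(m⁻ᵏ)` everywhere on the cube (`grid_close`). If `m < k` then `n` is bounded and the trivial bound
`|f - g| ≤ 2` is enough.

In one variable (`sampling_one_dim`), a function with `k`-th derivative bounded by `M` is within
`M (k/m)ᵏ` of its Taylor polynomial on a window of `k` consecutive nodes (`taylorChain_bound`), and a
polynomial of degree `< k` is bounded on the window by a constant times its maximum over the nodes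
(`lagrange_bound`). Hence smallness `O(m⁻ᵏ)` at the nodes propagates to the whole interval. In `d`
variables the coordinates are released from the grid one after another, applying the
one-dimensional inequality along coordinate lines; only the pure derivatives `∂ᵢᵏ` are needed.
-/

/-- First-order partial derivative in direction `i`, taken within the cube `[0,1]^d`. -/
noncomputable def pd (d : ℕ) (i : Fin d) (f : (Fin d → ℝ) → ℝ) : (Fin d → ℝ) → ℝ :=
  fun x => fderivWithin ℝ f (Set.Icc 0 1) x (Pi.single i 1)

/-- `m`-fold partial derivative in direction `i` within the cube. -/
noncomputable def pdIter (d : ℕ) (i : Fin d) : ℕ → ((Fin d → ℝ) → ℝ) → ((Fin d → ℝ) → ℝ)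
  | 0, f => f
  | m + 1, f => pd d i (pdIter d i m f)

/-- The partial derivative `D^α f` for a multi-index `α`, within the cube. -/
noncomputable def mDeriv {d : ℕ} (α : Fin d → ℕ) (f : (Fin d → ℝ) → ℝ) : (Fin d → ℝ) → ℝ :=
  (List.finRange d).foldr (fun i g => pdIter d i (α i) g) f

/-- Membership in the class `F_d^k`: `f` is `C^k` on `[0,1]^d` and all partial
derivatives `D^α f` with `|α| ≤ k` are bounded by 1 in sup norm on the cube. -/
def memFdk (d k : ℕ) (f : (Fin d → ℝ) → ℝ) : Prop :=
  ContDiffOn ℝ k f (Set.Icc 0 1) ∧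
    ∀ α : Fin d → ℕ, (∑ i, α i) ≤ k →
      ∀ x ∈ Set.Icc (0 : Fin d → ℝ) 1, |mDeriv α f x| ≤ 1

/-! ### One-dimensional sampling inequality -/

/-- The Taylor polynomial of degree `< k` at `a` built from a chain `u 0, u 1, …` of successive
derivatives. -/
noncomputable def taylorChain (k : ℕ) (u : ℕ → ℝ → ℝ) (a : ℝ) : Polynomial ℝ :=
  ∑ j ∈ Finset.range k, Polynomial.C (u j a / (j.factorial : ℝ)) *
    (Polynomial.X - Polynomial.C a) ^ j

lemma taylorChain_degree (k : ℕ) (u : ℕ → ℝ → ℝ) (a : ℝ) :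
    (taylorChain k u a).degree < k := by
  unfold taylorChain
  rw [← Polynomial.mem_degreeLT]
  refine Submodule.sum_mem _ fun j hj => ?_
  rw [Polynomial.mem_degreeLT]
  have h1 : ((Polynomial.X - Polynomial.C a : Polynomial ℝ) ^ j).degree = j := by
    rw [Polynomial.degree_pow, Polynomial.degree_X_sub_C]; simp
  have h2 : (Polynomial.C (u j a / (j.factorial : ℝ)) *
      (Polynomial.X - Polynomial.C a : Polynomial ℝ) ^ j).degree ≤ j := by
    rw [← Polynomial.smul_eq_C_mul, ← h1]
    exact Polynomial.degree_smul_le _ _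
  exact lt_of_le_of_lt h2 (by exact_mod_cast Finset.mem_range.mp hj)

lemma taylorChain_deriv (k : ℕ) (u : ℕ → ℝ → ℝ) (a : ℝ) :
    Polynomial.derivative (taylorChain (k + 1) u a) = taylorChain k (fun j => u (j + 1)) a := by
  unfold taylorChain
  rw [Finset.sum_range_succ', Polynomial.derivative_add, Polynomial.derivative_sum]
  simp only [pow_zero, mul_one, Polynomial.derivative_C, add_zero]
  refine Finset.sum_congr rfl fun j _ => ?_
  rw [Polynomial.derivative_C_mul, Polynomial.derivative_X_sub_C_pow, ← mul_assoc,
    ← Polynomial.C_mul, Nat.add_sub_cancel]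
  congr 2
  rw [Nat.factorial_succ]
  have := Nat.factorial_pos j
  push_cast
  field_simp

lemma taylorChain_eval_self (k : ℕ) (u : ℕ → ℝ → ℝ) (a : ℝ) :
    (taylorChain (k + 1) u a).eval a = u 0 a := by
  unfold taylorChain
  rw [Finset.sum_range_succ', Polynomial.eval_add, Polynomial.eval_finsetSum]
  simp

/-- Crude Taylor estimate with one-sided derivatives allowed at the end points. -/
lemma taylorChain_bound (M : ℝ) (hM : 0 ≤ M) (k : ℕ) :
    ∀ (u : ℕ → ℝ → ℝ),
      (∀ j < k, ∀ t ∈ Icc (0 : ℝ) 1, HasDerivWithinAt (u j) (u (j + 1) t) (Icc 0 1) t) →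
      (∀ t ∈ Icc (0 : ℝ) 1, |u k t| ≤ M) →
      ∀ a ∈ Icc (0 : ℝ) 1, ∀ t ∈ Icc (0 : ℝ) 1,
        |u 0 t - (taylorChain k u a).eval t| ≤ M * |t - a| ^ k := by
  induction k with
  | zero =>
    intro u _ hb a _ t ht
    simpa [taylorChain] using hb t ht
  | succ k ih =>
    intro u hd hb a ha t ht
    have ih' := ih (fun j => u (j + 1)) (fun j hj => hd (j + 1) (by omega)) hb a ha
    have hsub : uIcc a t ⊆ Icc (0 : ℝ) 1 := uIcc_subset_Icc ha ht
    have key := (convex_uIcc a t).norm_image_sub_le_of_norm_hasDerivWithin_le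
      (f := fun s => u 0 s - (taylorChain (k + 1) u a).eval s)
      (f' := fun s => u 1 s - (taylorChain k (fun j => u (j + 1)) a).eval s)
      (C := M * |t - a| ^ k) (x := a) (y := t)
      (fun s hs => by
        refine ((hd 0 (by omega) s (hsub hs)).mono hsub).sub ?_
        rw [← taylorChain_deriv]
        exact (Polynomial.hasDerivAt _ s).hasDerivWithinAt)
      (fun s hs => by
        refine (ih' s (hsub hs)).trans ?_
        have := abs_sub_left_of_mem_uIcc hs
        gcongr)
      left_mem_uIcc right_mem_uIcc
    simp only [taylorChain_eval_self, sub_self, sub_zero, Real.norm_eq_abs] at key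
    rw [pow_succ, ← mul_assoc]
    exact key

/-- A polynomial of degree `< k` on a window of `k` equispaced nodes is controlled by its values
at the nodes, by the Lagrange formula. -/
lemma lagrange_bound (k m b : ℕ) (hk : 1 ≤ k) (hm : 0 < m) (T : Polynomial ℝ)
    (hT : T.degree < k) (δ : ℝ)
    (hδ : ∀ i < k, |T.eval (((b + i : ℕ) : ℝ) / m)| ≤ δ) (t : ℝ)
    (h1 : (b : ℝ) / m ≤ t) (h2 : t ≤ ((b + k : ℕ) : ℝ) / m) :
    |T.eval t| ≤ k * (k : ℝ) ^ k * δ := by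
  have hm' : (0 : ℝ) < m := by exact_mod_cast hm
  have hk' : (1 : ℝ) ≤ k := by exact_mod_cast hk
  set v : ℕ → ℝ := fun i => ((b + i : ℕ) : ℝ) / m with hv
  have hinj : Set.InjOn v (Finset.range k : Finset ℕ) := by
    intro i _ j _ hij
    simp only [hv] at hij
    rw [div_left_inj' hm'.ne'] at hij
    have : b + i = b + j := by exact_mod_cast hij
    omega
  have hTe := Lagrange.eq_interpolate (s := Finset.range k) (v := v) (f := T) hinj (by simpa using hT)
  have hδ0 : 0 ≤ δ := (abs_nonneg _).trans (hδ 0 (by omega))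
  have hbasis : ∀ i ∈ Finset.range k,
      |(Lagrange.basis (Finset.range k) v i).eval t| ≤ (k : ℝ) ^ k := by
    intro i hi
    rw [Lagrange.basis, Polynomial.eval_prod, Finset.abs_prod]
    calc _ ≤ ∏ j ∈ (Finset.range k).erase i, (k : ℝ) := by
          refine Finset.prod_le_prod (fun _ _ => abs_nonneg _) fun j hj => ?_
          obtain ⟨hne, hj⟩ := Finset.mem_erase.mp hj
          have hjk : (j : ℝ) ≤ k := by exact_mod_cast (Finset.mem_range.mp hj).le
          simp only [Lagrange.basisDivisor, Polynomial.eval_mul, Polynomial.eval_C,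
            Polynomial.eval_sub, Polynomial.eval_X, abs_mul, abs_inv]
          have hA : (1 : ℝ) / m ≤ |v i - v j| := by
            have : v i - v j = (((i : ℤ) - (j : ℤ) : ℤ) : ℝ) / m := by
              simp only [hv]; push_cast; ring
            rw [this, abs_div, abs_of_pos hm']
            gcongr
            have : (1 : ℤ) ≤ |(i : ℤ) - j| := Int.one_le_abs (by omega)
            exact_mod_cast this
          have hB : |t - v j| ≤ k / m := by
            simp only [hv]
            push_cast at h2 ⊢
            rw [add_div] at h2 ⊢
            have : (j : ℝ) / m ≤ k / m := by gcongr
            have : 0 ≤ (j : ℝ) / m := by positivity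
            rw [abs_le]; constructor <;> linarith
          have hpos : 0 < |v i - v j| := lt_of_lt_of_le (by positivity) hA
          rw [inv_mul_le_iff₀ hpos]
          calc _ ≤ (k : ℝ) / m := hB
            _ = (1 / m) * k := by ring
            _ ≤ _ := by gcongr
      _ ≤ (k : ℝ) ^ k := by
          rw [Finset.prod_const]
          refine pow_le_pow_right₀ hk' ?_
          exact (Finset.card_erase_le).trans (by simp)
  rw [hTe, Lagrange.interpolate_apply, Polynomial.eval_finsetSum]
  refine (Finset.abs_sum_le_sum_abs _ _).trans ?_
  calc _ ≤ ∑ i ∈ Finset.range k, δ * (k : ℝ) ^ k := by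
        refine Finset.sum_le_sum fun i hi => ?_
        rw [Polynomial.eval_mul, Polynomial.eval_C, abs_mul]
        exact mul_le_mul (hδ i (Finset.mem_range.mp hi)) (hbasis i hi) (abs_nonneg _) hδ0
    _ = _ := by rw [Finset.sum_const, Finset.card_range, nsmul_eq_mul]; ring

/-- One-dimensional sampling inequality: a `C^k` function that is `O(m⁻ᵏ)` at the nodes
`0, 1/m, …, (m-1)/m` is `O(m⁻ᵏ)` on all of `[0,1]`. -/
lemma sampling_one_dim (k m : ℕ) (hk : 1 ≤ k) (hkm : k ≤ m) (u : ℕ → ℝ → ℝ) (M : ℝ) (hM : 0 ≤ M)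
    (hd : ∀ j < k, ∀ t ∈ Icc (0 : ℝ) 1, HasDerivWithinAt (u j) (u (j + 1) t) (Icc 0 1) t)
    (hb : ∀ t ∈ Icc (0 : ℝ) 1, |u k t| ≤ M) (K : ℝ)
    (hK : ∀ a < m, |u 0 ((a : ℝ) / m)| ≤ K / (m : ℝ) ^ k) (t : ℝ) (ht : t ∈ Icc (0 : ℝ) 1) :
    |u 0 t| ≤ (k * (k : ℝ) ^ k * (K + M * (k : ℝ) ^ k) + M * (k : ℝ) ^ k) / (m : ℝ) ^ k := by
  have hm : 0 < m := by omega
  have hm' : (0 : ℝ) < m := by exact_mod_cast hm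
  -- `k` consecutive nodes starting at `b/m`: `b = ⌊t m⌋`, or `m - k` if that window leaves the grid
  obtain ⟨b, hbm, h1, h2⟩ : ∃ b : ℕ, b + k ≤ m ∧ (b : ℝ) / m ≤ t ∧ t ≤ ((b + k : ℕ) : ℝ) / m := by
    have htm : 0 ≤ t * m := mul_nonneg ht.1 hm'.le
    rcases le_total (⌊t * m⌋₊) (m - k) with h | h
    · refine ⟨⌊t * m⌋₊, by omega, ?_, ?_⟩
      · rw [div_le_iff₀ hm']; exact Nat.floor_le htm
      · rw [le_div_iff₀ hm']
        refine (Nat.lt_floor_add_one (t * m)).le.trans ?_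
        push_cast
        have : (1 : ℝ) ≤ k := by exact_mod_cast hk
        linarith
    · refine ⟨m - k, by omega, ?_, ?_⟩
      · rw [div_le_iff₀ hm']
        exact le_trans (by exact_mod_cast h) (Nat.floor_le htm)
      · rw [Nat.sub_add_cancel hkm, div_self hm'.ne']; exact ht.2
  have hnode : ∀ i < k, ((b + i : ℕ) : ℝ) / m ∈ Icc (0 : ℝ) 1 := by
    intro i hi
    refine ⟨by positivity, ?_⟩
    rw [div_le_one hm']
    exact_mod_cast (by omega : b + i ≤ m)
  have ha : (b : ℝ) / m ∈ Icc (0 : ℝ) 1 := by simpa using hnode 0 (by omega)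
  set T := taylorChain k u ((b : ℝ) / m) with hTdef
  have hnear : ∀ s ∈ Icc (0 : ℝ) 1, (b : ℝ) / m ≤ s → s ≤ ((b + k : ℕ) : ℝ) / m →
      |u 0 s - T.eval s| ≤ M * (k : ℝ) ^ k / (m : ℝ) ^ k := by
    intro s hs hs1 hs2
    refine (taylorChain_bound M hM k u hd hb _ ha s hs).trans ?_
    rw [mul_div_assoc, ← div_pow]
    have : |s - (b : ℝ) / m| ≤ k / m := by
      push_cast at hs2
      rw [add_div] at hs2
      rw [abs_of_nonneg (by linarith)]; linarith
    gcongr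
  have hTt := lagrange_bound k m b hk hm T (taylorChain_degree k u _)
    (K / (m : ℝ) ^ k + M * (k : ℝ) ^ k / (m : ℝ) ^ k)
    (fun i hi => by
      have e1 := hnear _ (hnode i hi) (by push_cast; gcongr; simp)
        (by gcongr)
      have e2 := hK (b + i) (by omega)
      have e3 := abs_sub_abs_le_abs_sub (T.eval (((b + i : ℕ) : ℝ) / m)) (u 0 (((b + i : ℕ) : ℝ) / m))
      rw [abs_sub_comm] at e3
      linarith) t h1 h2
  have e1 := hnear t ht h1 h2
  have e3 := abs_sub_abs_le_abs_sub (u 0 t) (T.eval t)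
  rw [← add_div, ← mul_div_assoc] at hTt
  rw [add_div]
  linarith

/-! ### Partial derivatives along coordinate lines -/

lemma uniqueDiffOn_cube (d : ℕ) : UniqueDiffOn ℝ (Icc (0 : Fin d → ℝ) 1) := by
  rw [← pi_univ_Icc]
  exact UniqueDiffOn.univ_pi fun i => uniqueDiffOn_Icc (by simp)

lemma pdIter_contDiffOn (d : ℕ) (i : Fin d) (k : ℕ) (f : (Fin d → ℝ) → ℝ)
    (hf : ContDiffOn ℝ k f (Icc 0 1)) (j : ℕ) :
    ∀ l : ℕ, l + j ≤ k → ContDiffOn ℝ l (pdIter d i j f) (Icc 0 1) := by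
  induction j with
  | zero => exact fun l hl => hf.of_le (by exact_mod_cast hl)
  | succ j ih =>
    intro l hl
    have h := ih (l + 1) (by omega)
    exact (h.fderivWithin (uniqueDiffOn_cube d) (m := l) (by norm_cast)).clm_apply
      contDiffOn_const

lemma update_mem_cube {d : ℕ} {x : Fin d → ℝ} (hx : x ∈ Icc (0 : Fin d → ℝ) 1) (i : Fin d) {t : ℝ}
    (ht : t ∈ Icc (0 : ℝ) 1) : Function.update x i t ∈ Icc (0 : Fin d → ℝ) 1 := by
  constructor <;> intro j <;> by_cases h : j = i
  · subst h; simpa using ht.1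
  · simpa [h] using hx.1 j
  · subst h; simpa using ht.2
  · simpa [h] using hx.2 j

/-- Along a coordinate line in the cube, the iterated partial derivatives form a chain of
successive one-variable derivatives. -/
lemma pdIter_hasDeriv (d : ℕ) (i : Fin d) (k : ℕ) (f : (Fin d → ℝ) → ℝ)
    (hf : ContDiffOn ℝ k f (Icc 0 1)) (j : ℕ) (hj : j < k) (x : Fin d → ℝ)
    (hx : x ∈ Icc (0 : Fin d → ℝ) 1) (t : ℝ) (ht : t ∈ Icc (0 : ℝ) 1) :
    HasDerivWithinAt (fun s => pdIter d i j f (Function.update x i s))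
      (pdIter d i (j + 1) f (Function.update x i t)) (Icc 0 1) t := by
  have h1 : DifferentiableOn ℝ (pdIter d i j f) (Icc 0 1) :=
    (pdIter_contDiffOn d i k f hf j 1 (by omega)).differentiableOn (by norm_num)
  have h2 := (h1 _ (update_mem_cube hx i ht)).hasFDerivWithinAt
  exact h2.comp_hasDerivWithinAt t (hasDerivAt_update x i t).hasDerivWithinAt
    (fun s hs => update_mem_cube hx i hs)

lemma mDeriv_single {d : ℕ} (i : Fin d) (k : ℕ) (f : (Fin d → ℝ) → ℝ) :
    mDeriv (Pi.single i k) f = pdIter d i k f := by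
  have key : ∀ l : List (Fin d), l.Nodup →
      l.foldr (fun j g => pdIter d j ((Pi.single i k : Fin d → ℕ) j) g) f =
        if i ∈ l then pdIter d i k f else f := by
    intro l
    induction l with
    | nil => simp
    | cons a l ih =>
      intro hl
      rw [List.nodup_cons] at hl
      rw [List.foldr_cons, ih hl.2]
      by_cases h : a = i
      · subst h
        simp [hl.1]
      · have h' : i ≠ a := fun e => h e.symm
        simp [h, h', pdIter]
  unfold mDeriv
  rw [key _ (List.nodup_finRange d)]
  simp

/-! ### Functions agreeing on a grid, and the recovery bound -/

/-- The constants produced by freeing the coordinates one at a time. -/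
noncomputable def gridConst (k : ℕ) : ℕ → ℝ
  | 0 => 0
  | j + 1 => k * (k : ℝ) ^ k * (gridConst k j + 2 * (k : ℝ) ^ k) + 2 * (k : ℝ) ^ k

lemma gridConst_nonneg (k j : ℕ) : 0 ≤ gridConst k j := by
  induction j with
  | zero => simp [gridConst]
  | succ j ih => simp only [gridConst]; positivity

/-- Two members of the class agreeing on the grid are `O(m⁻ᵏ)`-close at every point whose
coordinates from the `j`-th on are grid coordinates. -/
lemma grid_close (k d m : ℕ) (hk : 1 ≤ k) (hkm : k ≤ m) (f g : (Fin d → ℝ) → ℝ)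
    (hf : memFdk d k f) (hg : memFdk d k g)
    (hfg : ∀ a : Fin d → Fin m, f (fun i => ((a i : ℕ) : ℝ) / m) = g (fun i => ((a i : ℕ) : ℝ) / m))
    (j : ℕ) : ∀ x ∈ Icc (0 : Fin d → ℝ) 1,
      (∀ i : Fin d, j ≤ (i : ℕ) → ∃ a < m, x i = (a : ℝ) / m) →
        |f x - g x| ≤ gridConst k j / (m : ℝ) ^ k := by
  induction j with
  | zero =>
    intro x hx hgrid
    choose a ha hxa using fun i => hgrid i (Nat.zero_le _)
    have : x = fun i => (((⟨a i, ha i⟩ : Fin m) : ℕ) : ℝ) / m := funext hxa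
    have h := hfg fun i => ⟨a i, ha i⟩
    rw [← this] at h
    simp [h, gridConst]
  | succ j ih =>
    intro x hx hgrid
    by_cases hj : j < d
    · set i : Fin d := ⟨j, hj⟩ with hi
      have hpure : ∀ F, memFdk d k F → ∀ y ∈ Icc (0 : Fin d → ℝ) 1, |pdIter d i k F y| ≤ 1 := by
        intro F hF y hy
        rw [← mDeriv_single]
        exact hF.2 _ (by simp) y hy
      have h := sampling_one_dim k m hk hkm
        (fun l s => pdIter d i l f (Function.update x i s) - pdIter d i l g (Function.update x i s))
        2 (by norm_num)
        (fun l hl t ht => (pdIter_hasDeriv d i k f hf.1 l hl x hx t ht).sub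
          (pdIter_hasDeriv d i k g hg.1 l hl x hx t ht))
        (fun t ht => by
          have hy := update_mem_cube hx i ht
          have := abs_sub (pdIter d i k f (Function.update x i t))
            (pdIter d i k g (Function.update x i t))
          linarith [hpure f hf _ hy, hpure g hg _ hy])
        (gridConst k j)
        (fun a ha => by
          have hm' : (0 : ℝ) < m := by exact_mod_cast (by omega : 0 < m)
          refine ih _ (update_mem_cube hx i ⟨by positivity, ?_⟩) fun i' hi' => ?_
          · rw [div_le_one hm']; exact_mod_cast ha.le
          · by_cases e : i' = i
            · subst e; exact ⟨a, ha, by simp⟩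
            · rw [Function.update_of_ne e]
              refine hgrid i' ?_
              have : (i' : ℕ) ≠ j := fun e' => e (Fin.ext e')
              omega)
        (x i) ⟨hx.1 i, hx.2 i⟩
      simpa [pdIter, gridConst] using h
    · refine (ih x hx fun i hi => absurd i.2 (by omega)).trans ?_
      have h0 := gridConst_nonneg k j
      have hk' : (1 : ℝ) ≤ k := by exact_mod_cast hk
      have hkk : (1 : ℝ) ≤ (k : ℝ) ^ k := one_le_pow₀ hk'
      gcongr
      simp only [gridConst]
      have : (1 : ℝ) ≤ k * (k : ℝ) ^ k := one_le_mul_of_one_le_of_one_le hk' hkk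
      nlinarith

/-- Optimal-order `L²` recovery on `F_d^k`: there is `C > 0` (depending on `k, d`)
such that for every `n ≥ 1` there are points `x_1, …, x_n` in the cube and a
reconstruction map `φ : ℝ^n → L²` with
`‖f - φ(f(x_1),…,f(x_n))‖_{L²([0,1]^d)} ≤ C n^{-k/d}` for all `f ∈ F_d^k`
(the squared `L²` norm is expressed via the lower Lebesgue integral). -/
theorem stmt6 (k d : ℕ) (hk : 1 ≤ k) (hd : 1 ≤ d) :
    ∃ C : ℝ, 0 < C ∧ ∀ n : ℕ, 1 ≤ n →
      ∃ x : Fin n → Fin d → ℝ, (∀ i, x i ∈ Set.Icc (0 : Fin d → ℝ) 1) ∧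
        ∃ φ : (Fin n → ℝ) → ((Fin d → ℝ) → ℝ),
          ∀ f : (Fin d → ℝ) → ℝ, memFdk d k f →
            (∫⁻ y in Set.Icc (0 : Fin d → ℝ) 1,
                ENNReal.ofReal ((f y - φ (fun i => f (x i)) y) ^ 2))
              ≤ ENNReal.ofReal ((C * (n : ℝ) ^ (-(k : ℝ) / d)) ^ 2) := by
  classical
  have hK := gridConst_nonneg k d
  have hk' : (1 : ℝ) ≤ k := by exact_mod_cast hk
  refine ⟨gridConst k d * 2 ^ k + 2 * (k : ℝ) ^ k, by positivity, fun n hn => ?_⟩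
  have hd' : (d : ℝ) ≠ 0 := by exact_mod_cast (by omega : d ≠ 0)
  have hn' : (1 : ℝ) ≤ n := by exact_mod_cast hn
  set r : ℝ := (n : ℝ) ^ (1 / (d : ℝ)) with hr
  have hr1 : 1 ≤ r := Real.one_le_rpow hn' (by positivity)
  have hrd : r ^ d = n := by
    rw [hr, one_div]; exact Real.rpow_inv_natCast_pow (by positivity) (by omega)
  have hrk : (n : ℝ) ^ (-(k : ℝ) / d) = 1 / r ^ k := by
    rw [hr, ← Real.rpow_natCast, ← Real.rpow_mul (by positivity), neg_div,
      Real.rpow_neg (by positivity), one_div]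
    congr 2; ring
  -- the grid with `m` nodes per direction, `m ^ d ≤ n`
  set m : ℕ := ⌊r⌋₊ with hm
  have hm1 : 1 ≤ m := Nat.le_floor (by simpa using hr1)
  have hm1' : (1 : ℝ) ≤ m := by exact_mod_cast hm1
  have hmr : (m : ℝ) ≤ r := Nat.floor_le (by linarith)
  have hrm : r < m + 1 := Nat.lt_floor_add_one r
  have hmd : m ^ d ≤ n := by
    have : (m : ℝ) ^ d ≤ n := by rw [← hrd]; gcongr
    exact_mod_cast this
  obtain ⟨e⟩ : Nonempty ((Fin d → Fin m) ↪ Fin n) :=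
    Function.Embedding.nonempty_of_card_le (by simpa using hmd)
  have : Nonempty (Fin m) := ⟨⟨0, hm1⟩⟩
  set x : Fin n → Fin d → ℝ := fun l i => ((Function.invFun e l i : ℕ) : ℝ) / m with hx
  refine ⟨x, fun l => ⟨fun i => ?_, fun i => ?_⟩, ?_⟩
  · simp only [hx, Pi.zero_apply]; positivity
  · simp only [hx, Pi.one_apply]
    rw [div_le_one (by linarith)]
    exact_mod_cast (Function.invFun e l i).2.le
  -- reconstruct by any member of the class that interpolates the data
  refine ⟨fun z => if h : ∃ g, memFdk d k g ∧ (fun i => g (x i)) = z then h.choose else 0,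
    fun f hf => ?_⟩
  have hex : ∃ g, memFdk d k g ∧ (fun i => g (x i)) = fun i => f (x i) := ⟨f, hf, rfl⟩
  simp only [dif_pos hex]
  obtain ⟨hg, hgf⟩ := hex.choose_spec
  generalize hex.choose = g at hg hgf ⊢
  have hpt : ∀ y ∈ Icc (0 : Fin d → ℝ) 1,
      |f y - g y| ≤ (gridConst k d * 2 ^ k + 2 * (k : ℝ) ^ k) * (n : ℝ) ^ (-(k : ℝ) / d) := by
    intro y hy
    rw [hrk, mul_one_div]
    have hrpos : 0 < r := by linarith
    by_cases hkm : k ≤ m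
    · have h := grid_close k d m hk hkm f g hf hg (fun a => by
        have := congrFun hgf (e a)
        simp only [hx, Function.leftInverse_invFun e.injective a] at this
        exact this.symm) d y hy (fun i hi => absurd i.2 (by omega))
      calc _ ≤ gridConst k d / (m : ℝ) ^ k := h
        _ ≤ gridConst k d / (r / 2) ^ k := by gcongr; linarith
        _ = gridConst k d * 2 ^ k / r ^ k := by rw [div_pow]; field_simp
        _ ≤ _ := by gcongr; linarith [show (0 : ℝ) ≤ 2 * (k : ℝ) ^ k by positivity]
    · -- bounded `n`: the trivial bound `|f - g| ≤ 2` suffices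
      have hsup : ∀ F, memFdk d k F → |F y| ≤ 1 := by
        intro F hF
        have := hF.2 (Pi.single ⟨0, hd⟩ 0) (by simp) y hy
        rwa [mDeriv_single] at this
      have hrk' : r ≤ k := by
        have : (m : ℝ) + 1 ≤ k := by exact_mod_cast (by omega : m + 1 ≤ k)
        linarith
      have h1 : r ^ k ≤ (k : ℝ) ^ k := by gcongr
      have h2 : 0 ≤ gridConst k d * 2 ^ k := by positivity
      rw [le_div_iff₀ (by positivity)]
      have h3 : |f y - g y| ≤ 2 := by linarith [abs_sub (f y) (g y), hsup f hf, hsup g hg]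
      have : |f y - g y| * r ^ k ≤ 2 * (k : ℝ) ^ k := by gcongr
      linarith
  calc _ ≤ ∫⁻ y in Icc (0 : Fin d → ℝ) 1, ENNReal.ofReal
          (((gridConst k d * 2 ^ k + 2 * (k : ℝ) ^ k) * (n : ℝ) ^ (-(k : ℝ) / d)) ^ 2) := by
        refine setLIntegral_mono' measurableSet_Icc fun y hy => ENNReal.ofReal_le_ofReal ?_
        exact sq_le_sq' (abs_le.mp (hpt y hy)).1 (abs_le.mp (hpt y hy)).2
    _ = _ := by rw [setLIntegral_const, Real.volume_Icc_pi]; simp
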